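/- arXiv:2112.08805 — 3 statements merged into one kernel-verified Lean document; each statement's English description precedes it below -/
import Mathlib

section
/- Let G be a connected C4-free graph with edge-connectivity at least 3, let u be a vertex of maximum eccentricity d, and let n_i denote the number of vertices at distance i from u. If n_i = 2 and n_{i+1} = 3 for some i ≤ d-1, then i ≤ d-2 and n_{i+2} ≥ 2. -/
/-- `G` contains no cycle of length 4 as a (not necessarily induced) subgraph. -/
def C4Free {V : Type*} (G : SimpleGraph V) : Prop :=
  ¬ ∃ a b c d : V, a ≠ b ∧ a ≠ c ∧ a ≠ d ∧ b ≠ c ∧ b ≠ d ∧ c ≠ d ∧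
    G.Adj a b ∧ G.Adj b c ∧ G.Adj c d ∧ G.Adj d a

/-- `G` has edge-connectivity at least `k`: it stays connected after
deleting any set of fewer than `k` edges. -/
def EdgeConnAtLeast {V : Type*} (G : SimpleGraph V) (k : ℕ) : Prop :=
  ∀ s : Finset (Sym2 V), s.card < k → (G.deleteEdges ↑s).Connected

/-!
Let `A`, `B`, `C` be the sets of vertices at distance `i`, `i + 1`, `i + 2` from `u`, and suppose
that `|A| < |B| ≤ k` and `2 < |B|` in a `k`-edge-connected graph without 4-cycles. Every vertex of
`B` has a neighbour in `A`, so two vertices of `B` share a neighbour in `A`. If `|C| ≤ 1`, then any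
two vertices of `B` also share a neighbour outside `A`, which closes a 4-cycle:

* if `C = {w}`, only the edges from `B` to `w` leave the ball of radius `i + 1` around `u`; there
  are at least `k ≥ |B|` of them, so `w` is adjacent to all of `B`;
* if `C = ∅`, the vertices of `B` have all their neighbours in `A ∪ B`. The neighbourhoods of two
  of them have at most one vertex in common, so they cover at least `2 * k - 1 ≥ |A ∪ B|` vertices,
  that is, all of `A ∪ B`. Hence `B` is a clique, and a third vertex of `B` is a common neighbour.
-/

open SimpleGraph

section

variable {V : Type*} {G : SimpleGraph V} {k : ℕ}

theorem C4Free.commonNeighbors_subsingleton (hC4 : C4Free G) {v w : V} (hvw : v ≠ w) :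
    (G.commonNeighbors v w).Subsingleton := by
  rintro x ⟨hvx, hwx⟩ y ⟨hvy, hwy⟩
  by_contra hxy
  exact hC4 ⟨v, x, w, y, hvx.ne, hvw, hvy.ne, hwx.ne', hxy, hwy.ne, hvx, hwx.symm, hwy, hvy.symm⟩

theorem C4Free.encard_neighborSet_add_le (hC4 : C4Free G) {v w : V} (hvw : v ≠ w) :
    (G.neighborSet v).encard + (G.neighborSet w).encard
      ≤ (G.neighborSet v ∪ G.neighborSet w).encard + 1 := by
  rw [← Set.encard_union_add_encard_inter, ← commonNeighbors_eq]
  gcongr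
  exact Set.encard_le_one_iff_subsingleton.2 (hC4.commonNeighbors_subsingleton hvw)

theorem C4Free.adj_of_neighborSet_subset (hC4 : C4Free G) {v w : V} {s : Set V} (hvw : v ≠ w)
    (hv : v ∈ s) (hvs : G.neighborSet v ⊆ s) (hws : G.neighborSet w ⊆ s)
    (hs : s.encard < (G.neighborSet v).encard + (G.neighborSet w).encard) : G.Adj v w := by
  by_contra hadj
  have hv_notMem : v ∉ G.neighborSet v ∪ G.neighborSet w := by simp [G.adj_comm w v, hadj]
  refine hs.not_ge ?_
  calc (G.neighborSet v).encard + (G.neighborSet w).encard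
      ≤ (G.neighborSet v ∪ G.neighborSet w).encard + 1 := hC4.encard_neighborSet_add_le hvw
    _ = (insert v (G.neighborSet v ∪ G.neighborSet w)).encard :=
        (Set.encard_insert_of_notMem hv_notMem).symm
    _ ≤ s.encard := Set.encard_le_encard (Set.insert_subset hv (Set.union_subset hvs hws))

theorem EdgeConnAtLeast.isEdgeConnected (h : EdgeConnAtLeast G k) : G.IsEdgeConnected k := by
  intro v w s hs
  have hfin : s.Finite := Set.finite_of_encard_le_coe hs.le
  lift s to Finset (Sym2 V) using hfin
  exact (h s (by simpa using hs)).preconnected v w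

theorem le_encard_neighborSet_of_isEdgeReachable {v w : V} (h : G.IsEdgeReachable k v w)
    (hvw : v ≠ w) : k ≤ (G.neighborSet v).encard := by
  obtain hfin | hinf := (G.neighborSet v).finite_or_infinite
  · have := hfin.fintype
    rw [← Set.coe_fintypeCard, card_neighborSet_eq_degree]
    exact_mod_cast h.le_degree hvw
  · simp [hinf.encard_eq]

/-- The edge boundary of a vertex set `s`, that is, the cut between `s` and its complement. Each
edge is encoded as the ordered pair of its endpoints in `s` and outside `s`. -/
def edgeBoundary (G : SimpleGraph V) (s : Set V) : Set (V × V) :=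
  {e | e.1 ∈ s ∧ e.2 ∉ s ∧ G.Adj e.1 e.2}

theorem le_encard_edgeBoundary_of_isEdgeReachable {v w : V} {s : Set V}
    (h : G.IsEdgeReachable k v w) (hv : v ∈ s) (hw : w ∉ s) :
    k ≤ (edgeBoundary G s).encard := by
  by_contra! hlt
  let toEdge (e : V × V) : Sym2 V := s(e.1, e.2)
  obtain ⟨walk⟩ := h ((Set.encard_image_le toEdge (edgeBoundary G s)).trans_lt hlt)
  obtain ⟨⟨e, hadj⟩, -, hfst, hsnd⟩ := walk.exists_boundary_dart s hv hw
  rw [deleteEdges_adj] at hadj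
  exact hadj.2 ⟨e, ⟨hfst, hsnd, hadj.1⟩, rfl⟩

/-- The distance level `i` of a vertex `u`: the vertices at graph distance exactly `i` from `u`, so
that `n i` is its cardinality. As `G.dist` is `0` between different components, level `0` is `{u}`
only for connected graphs. -/
def distLevel (G : SimpleGraph V) (u : V) (i : ℕ) : Set V := {v | G.dist u v = i}

variable {u v w : V} {i : ℕ}

theorem mem_distLevel : v ∈ distLevel G u i ↔ G.dist u v = i := Iff.rfl

theorem notMem_distLevel_of_mem_distLevel {j : ℕ} (hv : v ∈ distLevel G u j) (hij : j ≠ i) :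
    v ∉ distLevel G u i :=
  fun hv' ↦ hij (hv.symm.trans hv')

theorem dist_le_dist_add_one_of_adj (h : G.Adj v w) : G.dist u w ≤ G.dist u v + 1 := by
  have := h.diff_dist_adj (u := u)
  omega

theorem exists_adj_distLevel (hG : G.Connected) (hv : v ∈ distLevel G u (i + 1)) :
    ∃ w ∈ distLevel G u i, G.Adj v w := by
  obtain ⟨walk, hlen⟩ := hG.exists_walk_length_eq_dist v u
  rw [dist_comm, mem_distLevel.1 hv] at hlen
  cases walk with
  | nil => simp at hlen
  | @cons _ w _ hadj tail =>
    refine ⟨w, le_antisymm ?_ ?_, hadj⟩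
    · rw [dist_comm]
      exact (dist_le tail).trans_eq (by simpa using hlen)
    · have hle : G.dist u v ≤ G.dist u w + 1 := dist_le_dist_add_one_of_adj hadj.symm
      rw [mem_distLevel.1 hv] at hle
      omega

theorem exists_commonNeighbor_distLevel (hG : G.Connected)
    (hlt : (distLevel G u i).encard < (distLevel G u (i + 1)).encard) :
    ∃ v ∈ distLevel G u (i + 1), ∃ w ∈ distLevel G u (i + 1), v ≠ w ∧
      ∃ x ∈ distLevel G u i, x ∈ G.commonNeighbors v w := by
  choose! parent hparent hadj using fun v (hv : v ∈ distLevel G u (i + 1)) ↦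
    exists_adj_distLevel hG hv
  obtain ⟨v, hv, w, hw, hvw, heq⟩ := Set.exists_ne_map_eq_of_encard_lt_of_maps_to hlt hparent
  exact ⟨v, hv, w, hw, hvw, parent v, hparent v hv, hadj v hv, heq ▸ hadj w hw⟩

theorem neighborSet_subset_of_distLevel_eq_empty (hempty : distLevel G u (i + 2) = ∅)
    (hv : v ∈ distLevel G u (i + 1)) :
    G.neighborSet v ⊆ distLevel G u i ∪ distLevel G u (i + 1) := by
  intro w hadj
  have hw : w ∉ distLevel G u (i + 2) := Set.eq_empty_iff_forall_notMem.1 hempty w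
  have hdist := Adj.diff_dist_adj (u := u) hadj
  rw [mem_distLevel] at hv hw
  rw [Set.mem_union, mem_distLevel, mem_distLevel]
  omega

theorem isClique_distLevel_of_distLevel_eq_empty (hC4 : C4Free G) (hG : G.IsEdgeConnected k)
    (hempty : distLevel G u (i + 2) = ∅)
    (hcard : (distLevel G u i).encard + (distLevel G u (i + 1)).encard < k + k) :
    G.IsClique (distLevel G u (i + 1)) := by
  intro v hv w hw hvw
  refine hC4.adj_of_neighborSet_subset hvw (Or.inr hv)
    (neighborSet_subset_of_distLevel_eq_empty hempty hv)
    (neighborSet_subset_of_distLevel_eq_empty hempty hw) ?_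
  calc (distLevel G u i ∪ distLevel G u (i + 1)).encard
      ≤ (distLevel G u i).encard + (distLevel G u (i + 1)).encard := Set.encard_union_le _ _
    _ < k + k := hcard
    _ ≤ (G.neighborSet v).encard + (G.neighborSet w).encard :=
        add_le_add (le_encard_neighborSet_of_isEdgeReachable (hG v w) hvw)
          (le_encard_neighborSet_of_isEdgeReachable (hG w v) hvw.symm)

theorem distLevel_subset_neighborSet_of_distLevel_eq_singleton (hG : G.IsEdgeConnected k)
    (hcard : (distLevel G u (i + 1)).encard ≤ k) (hw : distLevel G u (i + 2) = {w}) :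
    distLevel G u (i + 1) ⊆ G.neighborSet w := by
  have hmem_iff (y : V) : G.dist u y = i + 2 ↔ y = w := Set.ext_iff.1 hw y
  set ball := {x | G.dist u x ≤ i + 1}
  have hboundary :
      edgeBoundary G ball ⊆ (·, w) '' (distLevel G u (i + 1) ∩ G.neighborSet w) := by
    rintro ⟨x, y⟩ ⟨hx : G.dist u x ≤ i + 1, hy : ¬ G.dist u y ≤ i + 1, hadj : G.Adj x y⟩
    have hxy : G.dist u y ≤ G.dist u x + 1 := dist_le_dist_add_one_of_adj hadj
    obtain rfl : y = w := (hmem_iff y).1 (by omega)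
    exact ⟨x, ⟨mem_distLevel.2 (by omega), hadj.symm⟩, rfl⟩
  have hle : k ≤ (distLevel G u (i + 1) ∩ G.neighborSet w).encard :=
    (le_encard_edgeBoundary_of_isEdgeReachable (hG u w) (by simp [ball])
      (by simp [ball, (hmem_iff w).2 rfl])).trans
      ((Set.encard_le_encard hboundary).trans (Set.encard_image_le _ _))
  have hfin : (distLevel G u (i + 1)).Finite := Set.finite_of_encard_le_coe hcard
  exact Set.inter_eq_left.1 ((hfin.inter_of_left _).eq_of_subset_of_encard_le
    Set.inter_subset_left (hcard.trans hle))

theorem exists_commonNeighbor_notMem_distLevel (hC4 : C4Free G) (hG : G.IsEdgeConnected k)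
    (hsub : (distLevel G u (i + 2)).Subsingleton)
    (hlt : (distLevel G u i).encard < (distLevel G u (i + 1)).encard)
    (htwo : 2 < (distLevel G u (i + 1)).encard) (hk : (distLevel G u (i + 1)).encard ≤ k)
    (hv : v ∈ distLevel G u (i + 1)) (hw : w ∈ distLevel G u (i + 1)) (hvw : v ≠ w) :
    ∃ x ∉ distLevel G u i, x ∈ G.commonNeighbors v w := by
  obtain hempty | ⟨x, hx⟩ := hsub.eq_empty_or_singleton
  · have hclique := isClique_distLevel_of_distLevel_eq_empty hC4 hG hempty
      (ENat.add_lt_add_of_lt_of_le (ne_top_of_le_ne_top (ENat.natCast_ne_top k) hk)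
        (hlt.trans_le hk) hk)
    obtain ⟨x, hx, hx_notMem⟩ : ∃ x ∈ distLevel G u (i + 1), x ∉ ({v, w} : Set V) :=
      Set.not_subset.1 fun hle ↦
        htwo.not_ge ((Set.encard_le_encard hle).trans_eq (Set.encard_pair hvw))
    obtain ⟨hxv, hxw⟩ : x ≠ v ∧ x ≠ w := by simpa using hx_notMem
    exact ⟨x, notMem_distLevel_of_mem_distLevel hx (by omega),
      hclique hv hx hxv.symm, hclique hw hx hxw.symm⟩
  · have hsubset := distLevel_subset_neighborSet_of_distLevel_eq_singleton hG hk hx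
    have hx_mem : x ∈ distLevel G u (i + 2) := hx ▸ rfl
    exact ⟨x, notMem_distLevel_of_mem_distLevel hx_mem (by omega),
      (hsubset hv).symm, (hsubset hw).symm⟩

theorem levels_two_three_general (hC4 : C4Free G) (hec : EdgeConnAtLeast G k) (u : V) (i : ℕ)
    (hlt : (distLevel G u i).encard < (distLevel G u (i + 1)).encard)
    (htwo : 2 < (distLevel G u (i + 1)).encard) (hk : (distLevel G u (i + 1)).encard ≤ k) :
    (distLevel G u (i + 2)).Nontrivial := by
  rw [← Set.not_subsingleton_iff]
  intro hsub
  have hG : G.IsEdgeConnected k := hec.isEdgeConnected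
  have hconn : G.Connected :=
    have : Nonempty V := ⟨u⟩
    hG.connected (by rintro rfl; exact (htwo.trans_le hk).not_ge (by simp))
  obtain ⟨v, hv, w, hw, hvw, x, hx, hx_common⟩ := exists_commonNeighbor_distLevel hconn hlt
  obtain ⟨y, hy, hy_common⟩ :=
    exists_commonNeighbor_notMem_distLevel hC4 hG hsub hlt htwo hk hv hw hvw
  exact hy (hC4.commonNeighbors_subsingleton hvw hx_common hy_common ▸ hx)

end

theorem levels_two_three {V : Type*} [Fintype V] (G : SimpleGraph V)
    (hconn : G.Connected) (hC4 : C4Free G) (hec : EdgeConnAtLeast G 3)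
    (u : V) (d : ℕ)
    (hdiam : ∀ v w : V, G.dist v w ≤ d) (hecc : ∃ v, G.dist u v = d)
    (n : ℕ → ℕ) (hn : ∀ i, n i = {v : V | G.dist u v = i}.ncard)
    (i : ℕ) (hi : i + 1 ≤ d) (h1 : n i = 2) (h2 : n (i + 1) = 3) :
    i + 2 ≤ d ∧ 2 ≤ n (i + 2) := by
  have hcard (j : ℕ) : (distLevel G u j).encard = n j := by
    rw [hn]
    exact (Set.toFinite _).cast_ncard_eq.symm
  have hnontrivial : (distLevel G u (i + 2)).Nontrivial := by
    apply levels_two_three_general hC4 hec u i <;> simp only [hcard, h1, h2] <;> norm_num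
  obtain ⟨v, hv⟩ := hnontrivial.nonempty
  refine ⟨hv ▸ hdiam u v, ?_⟩
  rw [hn]
  exact Set.one_lt_ncard_iff_nontrivial.2 hnontrivial
end

section
/- For every odd prime power q ≥ 7 and every positive integer k, there exists a connected C4-free graph of order (q²+q-1)k + 1, diameter 4k, and edge-connectivity at least q-6. -/
/-!
The polarity (Brown) graph of `PG(2, q)` for the form `x₁y₃ - x₂y₂ + x₃y₁` is `C₄`-free, because
two distinct points have only one common orthogonal point. Delete the point `[0 : 0 : 1]`: the
remaining points split into `q` columns, each an ideal point joined to `q` affine points. Also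
delete the edges between affine points of equal columns and of columns `a` and `c` with
`a + c = 1`. Two ideal points are then still joined by `q` edge-disjoint paths of length four, and
every affine point has `q - 1` edge-disjoint paths to ideal points, so the edge-connectivity is at
least `q - 1`.
The diameter is four, attained by the ideal points of columns `0` and `1`: a path between them must
leave column `0` for a column other than `0` and `1` before it can enter column `1`.

Gluing `k` copies along these two vertices in a chain preserves `C₄`-freeness and
edge-connectivity. The gluing of two graphs sits inside their box product, where distances add, so
diameters attained at the glued vertices add as well.
-/

open SimpleGraph

section General

variable {V W : Type*} {G : SimpleGraph V} {H : SimpleGraph W}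

theorem c4Free_iff_forall_common_neighbors :
    C4Free G ↔ ∀ ⦃p r x y⦄, G.Adj p x → G.Adj p y → G.Adj r x → G.Adj r y → p = r ∨ x = y := by
  constructor
  · intro hG p r x y hpx hpy hrx hry
    by_contra! hne
    exact hG ⟨p, x, r, y, hpx.ne, hne.1, hpy.ne, hrx.ne', hne.2, hry.ne,
      hpx, hrx.symm, hry, hpy.symm⟩
  · rintro hG ⟨a, b, c, d, -, hac, -, -, hbd, -, hab, hbc, hcd, hda⟩
    exact (hG hab hda.symm hbc.symm hcd).elim hac hbd

theorem EdgeConnAtLeast.mono {m n : ℕ} (hG : EdgeConnAtLeast G n) (hmn : m ≤ n) :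
    EdgeConnAtLeast G m :=
  fun s hs ↦ hG s (hs.trans_le hmn)

theorem edgeConnAtLeast_of_isEdgeConnected [Nonempty V] {n : ℕ} (hG : G.IsEdgeConnected n) :
    EdgeConnAtLeast G n := fun s hs ↦
  ⟨fun x y ↦ hG x y (by simpa [Set.encard_coe_eq_coe_finsetCard] using hs)⟩

theorem isEdgeReachable_map (f : G →g H) (hf : Function.Injective f) {n : ℕ} {x y : V}
    (h : G.IsEdgeReachable n x y) : H.IsEdgeReachable n (f x) (f y) := by
  intro s hs
  have hcard : (Sym2.map f ⁻¹' s).encard ≤ s.encard :=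
    Set.encard_le_encard_of_injOn (Set.mapsTo_preimage _ _) (Sym2.map.injective hf).injOn
  let f' : G.deleteEdges (Sym2.map f ⁻¹' s) →g H.deleteEdges s :=
    ⟨f, fun hxy ↦ deleteEdges_adj.2
      ⟨f.map_adj (deleteEdges_adj.1 hxy).1, (deleteEdges_adj.1 hxy).2⟩⟩
  exact (h (hcard.trans_lt hs)).map f'

theorem isEdgeReachable_of_disjoint_walks {ι : Type*} {n : ℕ} {x z : V} {y : ι → V}
    (p : ∀ i, G.Walk x (y i)) (hp : Pairwise fun i j ↦ (p i).edges.Disjoint (p j).edges)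
    (hn : n ≤ ENat.card ι) (hz : ∀ i, G.IsEdgeReachable n (y i) z) :
    G.IsEdgeReachable n x z := by
  intro s hs
  obtain ⟨i, hi⟩ : ∃ i, ∀ e ∈ (p i).edges, e ∉ s := by
    by_contra! hcut
    choose f hfp hfs using hcut
    have hf : Function.Injective f := fun i j hij ↦ by
      by_contra hne
      exact hp hne (hfp i) (hij ▸ hfp j)
    have hle : ENat.card ι ≤ s.encard :=
      hf.encard_range.trans <| Set.encard_le_encard (Set.range_subset_iff.2 hfs)
    exact (hs.trans_le hn).not_ge hle
  exact ((p i).toDeleteEdges s hi).reachable.trans (hz i hs)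

theorem edist_map_le (f : G →g H) (x y : V) : H.edist (f x) (f y) ≤ G.edist x y :=
  le_iInf fun p ↦ (edist_le (p.map f)).trans_eq (by rw [Walk.length_map])

theorem le_add_edist_of_forall_adj {φ : V → ℕ} (hφ : ∀ ⦃x y⦄, G.Adj x y → φ y ≤ φ x + 1)
    (x y : V) : (φ y : ℕ∞) ≤ φ x + G.edist x y := by
  have hwalk : ∀ {x y} (p : G.Walk x y), φ y ≤ φ x + p.length := by
    intro x y p
    induction p with
    | nil => simp
    | cons hadj p ih =>
      have := hφ hadj
      rw [Walk.length_cons]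
      omega
  by_cases hxy : G.Reachable x y
  · obtain ⟨p, hp⟩ := hxy.exists_walk_length_eq_edist
    rw [← hp]
    exact_mod_cast hwalk p
  · simp [edist_eq_top_of_not_reachable hxy]

end General

section Wedge

variable {V W : Type*} {G : SimpleGraph V} {H : SimpleGraph W} {t : V} {u : W}

/-- The vertex set of the wedge sum of two graphs, realised as a pair of crossing axes in
`V × W`; the basepoints `t` and `u` become the single vertex `(t, u)`. -/
def wedgeSet (t : V) (u : W) : Set (V × W) := {p | p.1 = t ∨ p.2 = u}

/-- The wedge sum of `G` and `H`, which identifies the vertex `t` of `G` with the vertex `u`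
of `H`. Realising it inside the box product makes distances easy to bound from below. -/
def wedge (G : SimpleGraph V) (H : SimpleGraph W) (t : V) (u : W) :
    SimpleGraph (wedgeSet t u) :=
  (G □ H).induce (wedgeSet t u)

/-- The inclusion of the first summand of a wedge sum. -/
def wedgeLeft (G : SimpleGraph V) (H : SimpleGraph W) (t : V) (u : W) : G ↪g wedge G H t u where
  toFun a := ⟨(a, u), .inr rfl⟩
  inj' _ _ h := congr_arg (·.1.1) h
  map_rel_iff' := boxProd_adj_left

/-- The inclusion of the second summand of a wedge sum. -/
def wedgeRight (G : SimpleGraph V) (H : SimpleGraph W) (t : V) (u : W) : H ↪g wedge G H t u where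
  toFun b := ⟨(t, b), .inl rfl⟩
  inj' _ _ h := congr_arg (·.1.2) h
  map_rel_iff' := boxProd_adj_right

theorem exists_eq_wedgeLeft_or_wedgeRight (G : SimpleGraph V) (H : SimpleGraph W)
    (x : wedgeSet t u) : (∃ a, x = wedgeLeft G H t u a) ∨ ∃ b, x = wedgeRight G H t u b := by
  obtain ⟨⟨a, b⟩, rfl | rfl⟩ := x
  · exact .inr ⟨b, rfl⟩
  · exact .inl ⟨a, rfl⟩

theorem ncard_wedgeSet_add_one [Finite V] [Finite W] (t : V) (u : W) :
    (wedgeSet t u).ncard + 1 = Nat.card V + Nat.card W := by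
  have hunion : wedgeSet t u = Set.univ ×ˢ {u} ∪ {t} ×ˢ Set.univ := by
    ext; simp [wedgeSet, or_comm]
  have hinter : (Set.univ ×ˢ {u} ∩ {t} ×ˢ Set.univ : Set (V × W)) = {(t, u)} := by
    ext; simp [Prod.ext_iff, and_comm]
  have hcard := Set.ncard_union_add_ncard_inter (Set.univ ×ˢ {u}) ({t} ×ˢ Set.univ : Set (V × W))
  rw [← hunion, hinter] at hcard
  simpa [Set.ncard_prod] using hcard

theorem isEdgeConnected_wedge {n : ℕ} (hG : G.IsEdgeConnected n) (hH : H.IsEdgeConnected n) :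
    (wedge G H t u).IsEdgeConnected n := by
  have hbase : ∀ x, (wedge G H t u).IsEdgeReachable n x (wedgeRight G H t u u) := by
    intro x
    obtain ⟨a, rfl⟩ | ⟨b, rfl⟩ := exists_eq_wedgeLeft_or_wedgeRight G H x
    · exact isEdgeReachable_map (wedgeLeft G H t u).toHom (wedgeLeft G H t u).injective (hG a t)
    · exact isEdgeReachable_map (wedgeRight G H t u).toHom (wedgeRight G H t u).injective (hH b u)
  exact fun x y ↦ (hbase x).trans (hbase y).symm

theorem edist_wedgeLeft_wedgeRight (a : V) (b : W) :
    (wedge G H t u).edist (wedgeLeft G H t u a) (wedgeRight G H t u b) =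
      G.edist a t + H.edist u b := by
  apply le_antisymm
  · calc
      _ ≤ (wedge G H t u).edist (wedgeLeft G H t u a) (wedgeLeft G H t u t) +
          (wedge G H t u).edist (wedgeRight G H t u u) (wedgeRight G H t u b) :=
        SimpleGraph.edist_triangle
      _ ≤ G.edist a t + H.edist u b :=
        add_le_add (edist_map_le (wedgeLeft G H t u).toHom a t)
          (edist_map_le (wedgeRight G H t u).toHom u b)
  · rw [← edist_boxProd (a, u) (t, b)]
    exact edist_map_le (SimpleGraph.Embedding.induce (wedgeSet t u)).toHom _ _

theorem ediam_wedge_le : (wedge G H t u).ediam ≤ G.ediam + H.ediam := by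
  have hcross (a : V) (b : W) :
      (wedge G H t u).edist (wedgeLeft G H t u a) (wedgeRight G H t u b) ≤ G.ediam + H.ediam :=
    (edist_wedgeLeft_wedgeRight a b).trans_le (add_le_add edist_le_ediam edist_le_ediam)
  refine ediam_le_of_edist_le fun x y ↦ ?_
  obtain ⟨a, rfl⟩ | ⟨b, rfl⟩ := exists_eq_wedgeLeft_or_wedgeRight G H x <;>
    obtain ⟨a', rfl⟩ | ⟨b', rfl⟩ := exists_eq_wedgeLeft_or_wedgeRight G H y
  · exact (edist_map_le (wedgeLeft G H t u).toHom a a').trans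
      (edist_le_ediam.trans le_self_add)
  · exact hcross a b'
  · rw [SimpleGraph.edist_comm]
    exact hcross a' b
  · exact (edist_map_le (wedgeRight G H t u).toHom b b').trans
      (edist_le_ediam.trans le_add_self)

theorem wedge_adj_iff {x y : wedgeSet t u} : (wedge G H t u).Adj x y ↔
    (G.Adj x.1.1 y.1.1 ∧ x.1.2 = u ∧ y.1.2 = u) ∨
      (H.Adj x.1.2 y.1.2 ∧ x.1.1 = t ∧ y.1.1 = t) := by
  change (G.Adj x.1.1 y.1.1 ∧ x.1.2 = y.1.2) ∨ (H.Adj x.1.2 y.1.2 ∧ x.1.1 = y.1.1) ↔ _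
  have hx : x.1.1 = t ∨ x.1.2 = u := x.2
  have hy : y.1.1 = t ∨ y.1.2 = u := y.2
  have hG : G.Adj x.1.1 y.1.1 → x.1.1 ≠ y.1.1 := Adj.ne
  have hH : H.Adj x.1.2 y.1.2 → x.1.2 ≠ y.1.2 := Adj.ne
  grind

theorem c4Free_wedge (hG : C4Free G) (hH : C4Free H) : C4Free (wedge G H t u) := by
  rw [c4Free_iff_forall_common_neighbors] at hG hH ⊢
  intro p r x y hpx hpy hrx hry
  have hpx_ne := hpx.ne
  have hpy_ne := hpy.ne
  have hrx_ne := hrx.ne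
  have hry_ne := hry.ne
  -- A closed walk of length four using both summands passes twice through the cut vertex `(t, u)`.
  grind [wedge_adj_iff]

end Wedge

universe u in
theorem exists_iterated_wedge {W : Type u} [Finite W] {H : SimpleGraph W} {u v : W} {n : ℕ}
    (hC4 : C4Free H) (hconn : H.IsEdgeConnected n) (huv : H.edist u v = H.ediam) (k : ℕ) :
    ∃ (V : Type u) (_ : Finite V) (G : SimpleGraph V) (s t : V),
      C4Free G ∧ G.IsEdgeConnected n ∧ G.edist s t = G.ediam ∧ G.ediam = k * H.ediam ∧
        Nat.card V = (Nat.card W - 1) * k + 1 := by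
  induction k with
  | zero =>
    refine ⟨PUnit, inferInstance, ⊥, .unit, .unit, ?_, .of_subsingleton, ?_, ?_, by simp⟩
    · exact c4Free_iff_forall_common_neighbors.2 fun _ _ _ _ _ _ _ _ ↦ .inl rfl
    · rw [edist_self, ediam_eq_zero_of_subsingleton]
    · rw [ediam_eq_zero_of_subsingleton, Nat.cast_zero, zero_mul]
  | succ k ih =>
    obtain ⟨V, _, G, s, t, hC4', hconn', hst, hdiam, hcard⟩ := ih
    have hdist : (wedge G H t u).edist (wedgeLeft G H t u s) (wedgeRight G H t u v) =
        G.ediam + H.ediam := by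
      rw [edist_wedgeLeft_wedgeRight, hst, huv]
    have hdiam' : (wedge G H t u).ediam = G.ediam + H.ediam :=
      ediam_wedge_le.antisymm (hdist ▸ edist_le_ediam)
    refine ⟨wedgeSet t u, inferInstance, wedge G H t u, _, _, c4Free_wedge hC4' hC4,
      isEdgeConnected_wedge hconn' hconn, hdist.trans hdiam'.symm, ?_, ?_⟩
    · rw [hdiam', hdiam, Nat.cast_succ, add_one_mul]
    · have hwedge := ncard_wedgeSet_add_one t u
      have : Nonempty W := ⟨u⟩
      have hpos : 0 < Nat.card W := Nat.card_pos
      rw [Nat.card_coe_set_eq, Nat.mul_succ]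
      omega

section ModifiedBrown

variable {R : Type*} [CommRing R]

/-- The condition on two columns `a` and `c` of the modified Brown graph under which the edges
of the Brown graph between them are kept. Excluding `a = c` removes the loops at absolute
points; excluding `a + c = 1` pulls the columns `0` and `1` apart. -/
def LinkedColumns (a c : R) : Prop := a ≠ c ∧ a + c ≠ 1

theorem LinkedColumns.symm {a c : R} (h : LinkedColumns a c) : LinkedColumns c a :=
  ⟨h.1.symm, add_comm a c ▸ h.2⟩

theorem exists_linkedColumns [Fintype R] (hR : 5 ≤ Fintype.card R) (a c : R) :
    ∃ x, LinkedColumns a x ∧ LinkedColumns c x := by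
  classical
  have hcard : ({a, 1 - a, c, 1 - c} : Finset R).card < (Finset.univ : Finset R).card :=
    Finset.card_le_four.trans_lt (by rw [Finset.card_univ]; omega)
  obtain ⟨x, -, hx⟩ := Finset.exists_mem_notMem_of_card_lt_card hcard
  refine ⟨x, ?_⟩
  simp only [LinkedColumns]
  grind

theorem card_sub_one_le_card_option_linkedColumns [Fintype R] (a : R) :
    ((Fintype.card R - 1 : ℕ) : ℕ∞) ≤ ENat.card (Option {x // LinkedColumns a x}) := by
  classical
  have hcompl : Fintype.card {x // LinkedColumns a x} = ({a, 1 - a}ᶜ : Finset R).card := by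
    refine Fintype.card_of_subtype _ fun x ↦ ?_
    simp only [LinkedColumns, Finset.mem_compl, Finset.mem_insert, Finset.mem_singleton]
    grind
  have htwo : ({a, 1 - a} : Finset R).card ≤ 2 := Finset.card_le_two
  rw [ENat.card_eq_coe_fintype_card, Fintype.card_option, hcompl, Finset.card_compl]
  exact_mod_cast by omega

variable (R) in
/-- The modified Brown graph. The Brown graph is the polarity graph of the projective plane over
`R` for the form `x₁y₃ - x₂y₂ + x₃y₁`; `(a, some b)` stands for the point `[1 : a : b]` and
`(a, none)` for `[0 : 1 : a]`. The point `[0 : 0 : 1]` is deleted, as are the edges between the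
affine points of columns that are not linked. -/
def modifiedBrownGraph : SimpleGraph (R × Option R) where
  Adj
    | (a, none), (c, some _) => a = c
    | (a, some _), (c, none) => a = c
    | (a, some b), (c, some d) => b + d = a * c ∧ LinkedColumns a c
    | (_, none), (_, none) => False
  symm := ⟨by
    rintro ⟨a, _ | b⟩ ⟨c, _ | d⟩ h
    · exact h
    · exact h.symm
    · exact h.symm
    · exact ⟨by rw [add_comm, h.1, mul_comm], h.2.symm⟩⟩
  loopless := ⟨by
    rintro ⟨a, _ | b⟩ h
    · exact h
    · exact h.2.1 rfl⟩

theorem modifiedBrownGraph_adj_none_some (a b : R) :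
    (modifiedBrownGraph R).Adj (a, none) (a, some b) := rfl

theorem modifiedBrownGraph_adj_some_some {a c : R} (b d : R) (hac : LinkedColumns a c)
    (h : b + d = a * c) : (modifiedBrownGraph R).Adj (a, some b) (c, some d) := ⟨h, hac⟩

theorem eq_of_adj_some_of_fst_eq {a b : R} {x y : R × Option R}
    (hx : (modifiedBrownGraph R).Adj (a, some b) x) (hy : (modifiedBrownGraph R).Adj (a, some b) y)
    (hxy : x.1 = y.1) : x = y := by
  obtain ⟨c, _ | d⟩ := x <;> obtain ⟨c', _ | d'⟩ := y <;> obtain rfl : c = c' := hxy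
  · rfl
  · exact (hy.2.1 hx).elim
  · exact (hx.2.1 hy).elim
  · rw [add_left_cancel (hx.1.trans hy.1.symm)]

theorem c4Free_modifiedBrownGraph [NoZeroDivisors R] : C4Free (modifiedBrownGraph R) := by
  rw [c4Free_iff_forall_common_neighbors]
  rintro ⟨a, _ | b⟩ ⟨c, _ | d⟩ ⟨e, _ | f⟩ ⟨e', _ | f'⟩ hpx hpy hrx hry
  all_goals first | exact hpx.elim | exact hpy.elim | exact hrx.elim | exact hry.elim | skip
  · exact .inl (Prod.ext (hpx.trans hrx.symm) rfl)
  · exact .inr (eq_of_adj_some_of_fst_eq hrx hry (hpx.symm.trans hpy))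
  · exact .inr (eq_of_adj_some_of_fst_eq hpx hpy (hrx.symm.trans hry))
  · exact .inr (Prod.ext (hpx.symm.trans hpy) rfl)
  · exact .inl (eq_of_adj_some_of_fst_eq hpy.symm hry.symm (hpx.trans hrx.symm))
  · exact .inl (eq_of_adj_some_of_fst_eq hpx.symm hrx.symm (hpy.trans hry.symm))
  · have hprod : (a - c) * (e - e') = 0 := by
      linear_combination -hpx.1 + hpy.1 + hrx.1 - hry.1
    obtain hac | hee' := mul_eq_zero.1 hprod
    · exact .inl (eq_of_adj_some_of_fst_eq hpx.symm hrx.symm (sub_eq_zero.1 hac))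
    · exact .inr (eq_of_adj_some_of_fst_eq hpx hpy (sub_eq_zero.1 hee'))

/-- The walk `(a, none), (a, some (a * x - y)), (x, some y)`. -/
def climb {a x : R} (h : LinkedColumns a x) (y : R) :
    (modifiedBrownGraph R).Walk (a, none) (x, some y) :=
  .cons (modifiedBrownGraph_adj_none_some a (a * x - y))
    (modifiedBrownGraph_adj_some_some _ _ h (sub_add_cancel _ _)).toWalk

theorem edges_climb {a x : R} (h : LinkedColumns a x) (y : R) :
    (climb h y).edges =
      [s((a, none), (a, some (a * x - y))), s((a, some (a * x - y)), (x, some y))] := rfl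

theorem ediam_modifiedBrownGraph_le [Fintype R] (hR : 5 ≤ Fintype.card R) :
    (modifiedBrownGraph R).ediam ≤ 4 := by
  have hwalk : ∀ {p r : R × Option R} (w : (modifiedBrownGraph R).Walk p r), w.length ≤ 4 →
      (modifiedBrownGraph R).edist p r ≤ 4 :=
    fun w hw ↦ (edist_le w).trans (by exact_mod_cast hw)
  have hsome_none (a b c : R) : (modifiedBrownGraph R).edist (a, some b) (c, none) ≤ 4 := by
    obtain ⟨x, hax, hcx⟩ := exists_linkedColumns hR a c
    exact hwalk (.cons (modifiedBrownGraph_adj_some_some b (a * x - b) hax (by ring))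
      (climb hcx _).reverse) (by simp [climb])
  refine ediam_le_of_edist_le ?_
  rintro ⟨a, _ | b⟩ ⟨c, _ | d⟩
  · obtain ⟨x, hax, hcx⟩ := exists_linkedColumns hR a c
    exact hwalk ((climb hax 0).append (climb hcx 0).reverse) (by simp [climb])
  · rw [SimpleGraph.edist_comm]
    exact hsome_none c d a
  · exact hsome_none a b c
  · obtain ⟨x, hax, hcx⟩ := exists_linkedColumns hR a c
    exact hwalk (.cons (modifiedBrownGraph_adj_none_some a b).symm ((climb hax (c * x - d)).append
      (modifiedBrownGraph_adj_some_some d _ hcx (by ring)).symm.toWalk)) (by simp [climb])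

theorem four_le_edist_modifiedBrownGraph [Nontrivial R] :
    4 ≤ (modifiedBrownGraph R).edist (0, none) (1, none) := by
  classical
  let level : R × Option R → ℕ
    | (a, none) => if a = 0 then 0 else if a = 1 then 4 else 2
    | (a, some _) => if a = 0 then 1 else if a = 1 then 3 else 2
  have hlevel : ∀ ⦃p r⦄, (modifiedBrownGraph R).Adj p r → level r ≤ level p + 1 := by
    rintro ⟨a, _ | b⟩ ⟨c, _ | d⟩ h <;>
      simp only [modifiedBrownGraph, LinkedColumns, level] at h ⊢ <;> grind
  simpa [level] using le_add_edist_of_forall_adj hlevel (0, none) (1, none)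

theorem isEdgeReachable_modifiedBrownGraph_none_none [Fintype R] (hR : 5 ≤ Fintype.card R)
    (a c : R) :
    (modifiedBrownGraph R).IsEdgeReachable (Fintype.card R) (a, none) (c, none) := by
  obtain ⟨x, hax, hcx⟩ := exists_linkedColumns hR a c
  refine isEdgeReachable_of_disjoint_walks
    (fun y ↦ (climb hax y).append (climb hcx y).reverse) ?_ (by simp) fun _ ↦ .rfl
  intro y y' hyy' e he he'
  simp only [Walk.edges_append, Walk.edges_reverse, edges_climb, List.mem_append,
    List.mem_reverse, List.mem_cons, List.not_mem_nil, or_false] at he he'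
  rcases he with (rfl | rfl) | rfl | rfl <;>
    simp only [Sym2.eq_iff, Prod.mk.injEq, Option.some.injEq] at he' <;>
    grind [LinkedColumns]

theorem isEdgeConnected_modifiedBrownGraph [Fintype R] (hR : 5 ≤ Fintype.card R) :
    (modifiedBrownGraph R).IsEdgeConnected (Fintype.card R - 1) := by
  have hnone (a c : R) :
      (modifiedBrownGraph R).IsEdgeReachable (Fintype.card R - 1) (a, none) (c, none) :=
    (isEdgeReachable_modifiedBrownGraph_none_none hR a c).anti (Nat.sub_le _ _)
  suffices hbase : ∀ p, (modifiedBrownGraph R).IsEdgeReachable (Fintype.card R - 1) p (0, none) from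
    fun p r ↦ (hbase p).trans (hbase r).symm
  rintro ⟨a, _ | b⟩
  · exact hnone a 0
  let walk : (i : Option {x // LinkedColumns a x}) →
      (modifiedBrownGraph R).Walk (a, some b) (i.elim a Subtype.val, none)
    | none => (modifiedBrownGraph_adj_none_some a b).symm.toWalk
    | some x => .cons (modifiedBrownGraph_adj_some_some b (a * x - b) x.2 (by ring))
        (modifiedBrownGraph_adj_none_some _ _).symm.toWalk
  refine isEdgeReachable_of_disjoint_walks walk ?_
    (card_sub_one_le_card_option_linkedColumns a) fun _ ↦ hnone _ 0
  rintro (_ | ⟨x, hx⟩) (_ | ⟨y, hy⟩) hne e he he' <;>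
    simp only [walk, Option.elim_none, Option.elim_some, Walk.edges_cons, Walk.edges_nil,
      List.mem_cons, List.not_mem_nil, or_false] at he he' <;>
    grind [LinkedColumns]

end ModifiedBrown

theorem exists_field_card_eq {q : ℕ} (hq : IsPrimePow q) :
    ∃ (F : Type) (_ : Field F) (_ : Fintype F), Fintype.card F = q := by
  obtain ⟨hF⟩ := Fintype.nonempty_field_iff.2 ((Fintype.card_fin q).symm ▸ hq)
  exact ⟨Fin q, hF, inferInstance, Fintype.card_fin q⟩

theorem exists_c4free_large_diam_general (q k : ℕ) (hq : IsPrimePow q) (hq5 : 5 ≤ q) :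
    ∃ (V : Type) (_ : Fintype V) (G : SimpleGraph V),
      G.Connected ∧ C4Free G ∧
      Fintype.card V = (q ^ 2 + q - 1) * k + 1 ∧
      G.diam = 4 * k ∧
      EdgeConnAtLeast G (q - 1) := by
  obtain ⟨F, _, _, rfl⟩ := exists_field_card_eq hq
  have hdiam : (modifiedBrownGraph F).ediam = 4 :=
    (ediam_modifiedBrownGraph_le hq5).antisymm
      (four_le_edist_modifiedBrownGraph.trans edist_le_ediam)
  have hdist : (modifiedBrownGraph F).edist (0, none) (1, none) = (modifiedBrownGraph F).ediam :=
    edist_le_ediam.antisymm (hdiam ▸ four_le_edist_modifiedBrownGraph)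
  obtain ⟨V, _, G, s, -, hC4, hconn, -, hGdiam, hcard⟩ := exists_iterated_wedge
    c4Free_modifiedBrownGraph (isEdgeConnected_modifiedBrownGraph hq5) hdist k
  have : Nonempty V := ⟨s⟩
  have hediam : G.ediam = (4 * k : ℕ) := by rw [hGdiam, hdiam, mul_comm]; norm_cast
  refine ⟨V, .ofFinite V, G, connected_of_ediam_ne_top (hediam ▸ ENat.natCast_ne_top _), hC4,
    ?_, ?_, edgeConnAtLeast_of_isEdgeConnected hconn⟩
  · rw [Fintype.card_eq_nat_card, hcard, Nat.card_prod, Finite.card_option,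
      Nat.card_eq_fintype_card]
    ring_nf
  · rw [diam, hediam, ENat.toNat_natCast]

theorem exists_c4free_large_diam (q k : ℕ) (hq : IsPrimePow q) (hodd : Odd q)
    (hq7 : 7 ≤ q) (hk : 0 < k) :
    ∃ (V : Type) (_ : Fintype V) (G : SimpleGraph V),
      G.Connected ∧ C4Free G ∧
      Fintype.card V = (q ^ 2 + q - 1) * k + 1 ∧
      G.diam = 4 * k ∧
      EdgeConnAtLeast G (q - 6) := by
  obtain ⟨V, hV, G, hG, hC4, hcard, hdiam, hconn⟩ :=
    exists_c4free_large_diam_general q k hq (by omega)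
  exact ⟨V, hV, G, hG, hC4, hcard, hdiam, hconn.mono (by omega)⟩
end

section
/- For every positive integer k there exists a connected C4-free graph with edge-connectivity at least 3, order n = 5k + 18, and diameter d = 2k + 6; in particular d = (2n-6)/5. -/
/-!
The graphs are chains: a head with 8 vertices, `k` links with 5 vertices each and a tail with 10
vertices, consecutive pieces being joined at two root vertices `a` and `b`. The chain grows from the
tail by induction on `k`, carrying an invariant of the part built so far.

* A 4-cycle running through two pieces would contain an edge `ab`, or a path of length 2 from `a`
  to `b` in the older piece; both are excluded by keeping `a` and `b` nonadjacent in the newer piece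
  and at distance more than 2 in the older one.
* The size of an edge cut of a chain is the sum of its sizes on the pieces. A nontrivial cut of the
  older part has at least 3 edges if it leaves the roots together and at least 1 if it separates
  them; in the latter case at least 2 more edges of the newer piece are cut.
* Every link adds 2 to the number of distance layers. A function that grows by at most 1 along every
  edge bounds the diameter from below, and paths through the root `a` bound it from above.
-/

namespace RootedGraph

open SimpleGraph

variable {V W : Type*} {G H : SimpleGraph V} {k n : ℕ} {a b u v : V}

theorem two_lt_edist_iff_forall : 2 < G.edist u v ↔
    u ≠ v ∧ ¬G.Adj u v ∧ ∀ x, G.Adj u x → ¬G.Adj v x := by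
  simp [two_lt_edist_iff, Set.eq_empty_iff_forall_notMem, mem_commonNeighbors]

-- The quantifiers are interleaved with the adjacencies so that `decide` prunes its search.
theorem c4Free_iff : C4Free G ↔
    ∀ a b, G.Adj a b → ∀ c, G.Adj b c → ∀ d, G.Adj c d → G.Adj d a → a = c ∨ b = d := by
  refine ⟨fun h a b hab c hbc d hcd hda ↦ ?_, ?_⟩
  · by_contra! hne
    exact h ⟨a, b, c, d, hab.ne, hne.1, hda.ne', hbc.ne, hne.2, hcd.ne, hab, hbc, hcd, hda⟩
  · rintro h ⟨a, b, c, d, -, hac, -, -, hbd, -, hab, hbc, hcd, hda⟩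
    exact (h a b hab c hbc d hcd hda).elim hac hbd

theorem c4Free_map (φ : V ↪ W) (hG : C4Free G) : C4Free (G.map φ) := by
  rw [c4Free_iff] at hG ⊢
  rintro _ _ ⟨-, a, b, hab, rfl, rfl⟩ _ ⟨-, b', c, hbc, hb, rfl⟩ _ ⟨-, c', d, hcd, hc, rfl⟩
    ⟨-, d', a', hda, hd, ha⟩
  simp only [φ.injective.eq_iff] at hb hc hd ha ⊢
  subst hb hc hd ha
  exact hG _ _ hab _ hbc _ hcd hda

theorem c4Free_sup (hG : C4Free G) (hH : C4Free H) (hsupp : G.support ∩ H.support ⊆ {a, b})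
    (hGab : ¬G.Adj a b) (hHab : 2 < H.edist a b) : C4Free (G ⊔ H) := by
  obtain ⟨-, hHab, hcommon⟩ := two_lt_edist_iff_forall.1 hHab
  have shared {x y z} (hxy : G.Adj x y) (hxz : H.Adj x z) : x ∈ ({a, b} : Set V) :=
    hsupp ⟨⟨y, hxy⟩, ⟨z, hxz⟩⟩
  have no_chord {x y} (hxy : G.Adj x y ∨ H.Adj x y) :
      ¬(x ∈ ({a, b} : Set V) ∧ y ∈ ({a, b} : Set V)) := by
    grind [Adj.symm, Adj.ne]
  have no_common {x y z} (hx : x ∈ ({a, b} : Set V)) (hy : y ∈ ({a, b} : Set V)) (hxy : x ≠ y)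
      (hxz : H.Adj x z) : ¬H.Adj y z := by
    grind
  rw [c4Free_iff] at hG hH ⊢
  clear hsupp hGab hHab hcommon
  generalize ({a, b} : Set V) = S at *
  intro p q hpq r hqr s hrs hsp
  simp only [sup_adj] at hpq hqr hrs hsp
  -- Two consecutive edges in each graph contradict `no_common`; in every other mixed case some edge
  -- has both ends shared and contradicts `no_chord`.
  rcases hpq with hpq | hpq <;> rcases hqr with hqr | hqr <;> rcases hrs with hrs | hrs <;>
    rcases hsp with hsp | hsp <;> grind [Adj.symm]

/-! ### Distances -/

theorem edist_map_le (φ : V ↪ W) : (G.map φ).edist (φ u) (φ v) ≤ G.edist u v := by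
  by_cases h : G.edist u v = ⊤
  · simp [h]
  · obtain ⟨w, hw⟩ := exists_walk_of_edist_ne_top h
    rw [← hw, ← Walk.length_map (Embedding.map φ G).toHom]
    exact edist_le _

theorem edist_le_of_iterate_eq (parent : V → V)
    (hparent : ∀ v, parent v = v ∨ G.Adj v (parent v)) (m : ℕ) (h : parent^[m] u = v) :
    G.edist u v ≤ m := by
  induction m generalizing u with
  | zero => simp_all
  | succ m ih =>
    have hu : G.edist u (parent u) ≤ 1 :=
      edist_le_one_iff_adj_or_eq.2 ((hparent u).symm.imp_right Eq.symm)
    calc G.edist u v ≤ G.edist u (parent u) + G.edist (parent u) v := G.edist_triangle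
      _ ≤ 1 + m := add_le_add hu (ih h)
      _ = (m + 1 : ℕ) := by rw [add_comm, Nat.cast_succ]

theorem two_lt_edist_map (φ : V ↪ W) (h : 2 < G.edist u v) :
    2 < (G.map φ).edist (φ u) (φ v) := by
  rw [two_lt_edist_iff_forall] at h ⊢
  obtain ⟨hne, hadj, hcommon⟩ := h
  refine ⟨φ.injective.ne hne, by simpa using hadj, ?_⟩
  rintro _ ⟨-, u', x, hux, hu, rfl⟩
  rw [φ.injective.eq_iff] at hu
  subst hu
  simpa using hcommon x hux

theorem two_lt_edist_sup (h : 2 < G.edist u v) (hu : u ∉ H.support) (hv : v ∉ H.support) :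
    2 < (G ⊔ H).edist u v := by
  have adj_iff {x y} (hx : x ∉ H.support) : (G ⊔ H).Adj x y ↔ G.Adj x y :=
    or_iff_left fun hxy ↦ hx ⟨y, hxy⟩
  simpa only [two_lt_edist_iff_forall, adj_iff hu, adj_iff hv] using h

/-- `g` increases by at most one along every edge, so that differences of values of `g` are lower
bounds for distances. -/
def IsLeveling (G : SimpleGraph V) (g : V → ℕ) : Prop :=
  ∀ u v, G.Adj u v → g v ≤ g u + 1

theorem IsLeveling.sup {g : V → ℕ} (hG : IsLeveling G g) (hH : IsLeveling H g) :
    IsLeveling (G ⊔ H) g :=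
  fun u v h ↦ h.elim (hG u v) (hH u v)

theorem IsLeveling.map {g : W → ℕ} (φ : V → W) (hG : IsLeveling G (g ∘ φ)) :
    IsLeveling (G.map φ) g := by
  rintro _ _ ⟨-, u, v, huv, rfl, rfl⟩
  exact hG u v huv

theorem IsLeveling.le_add_length {g : V → ℕ} (hg : IsLeveling G g) (w : G.Walk u v) :
    g v ≤ g u + w.length := by
  induction w with
  | nil => simp
  | cons h p ih =>
    have := hg _ _ h
    rw [Walk.length_cons]
    omega

theorem IsLeveling.diam_eq {g : V → ℕ} (hg : IsLeveling G g) (hu : g u = 0) {d : ℕ}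
    (hv : g v = d) (hd : ∀ x y, G.edist x y ≤ d) : G.diam = d := by
  have hle : (d : ℕ∞) ≤ G.edist u v := by
    refine le_iInf fun w ↦ ?_
    have := hg.le_add_length w
    rw [hu, hv, zero_add] at this
    exact_mod_cast this
  have : G.ediam = d := le_antisymm (ediam_le_of_edist_le hd) (hle.trans edist_le_ediam)
  rw [diam, this, ENat.toNat_natCast]

/-! ### Edge cuts -/

/-- The edge cut of a bipartition of the vertices. The two sides are the fibres of `f : V → Bool`,
so that statements about all cuts of a concrete finite graph are decidable. -/
def cutEdges (G : SimpleGraph V) (f : V → Bool) : Set (Sym2 V) :=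
  {e ∈ G.edgeSet | ¬(e.map f).IsDiag}

theorem connected_of_edgeConnAtLeast (h : EdgeConnAtLeast G k) (hk : 0 < k) : G.Connected := by
  simpa using h ∅ (by simpa)

theorem edgeConnAtLeast_of_le_ncard_cutEdges [Nonempty V]
    (h : ∀ f : V → Bool, (∃ u v, f u ≠ f v) → k ≤ (cutEdges G f).ncard) :
    EdgeConnAtLeast G k := by
  classical
  refine fun s hs ↦ ⟨fun u v ↦ ?_⟩
  by_contra huv
  let f : V → Bool := fun x ↦ decide ((G.deleteEdges s).Reachable u x)
  have hsub : cutEdges G f ⊆ s := by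
    rintro ⟨x, y⟩ ⟨hxy, hf⟩
    by_contra hs
    have hreach : (G.deleteEdges s).Reachable x y := (deleteEdges_adj.2 ⟨hxy, hs⟩).reachable
    exact hf (decide_eq_decide.2 ⟨(·.trans hreach), (·.trans hreach.symm)⟩)
  have hcut : k ≤ (cutEdges G f).ncard := h f ⟨u, v, by simp [f, huv]⟩
  have : (cutEdges G f).ncard ≤ s.card := by
    simpa using Set.ncard_le_ncard hsub s.finite_toSet
  omega

theorem ncard_cutEdges_sup [Finite V] (h : Disjoint G H) (f : V → Bool) :
    (cutEdges (G ⊔ H) f).ncard = (cutEdges G f).ncard + (cutEdges H f).ncard := by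
  have hdisj : Disjoint (cutEdges G f) (cutEdges H f) :=
    (disjoint_edgeSet.2 h).mono (Set.sep_subset _ _) (Set.sep_subset _ _)
  rw [← Set.ncard_union_eq hdisj]
  congr 1
  ext e
  simp [cutEdges, or_and_right]

theorem ncard_cutEdges_map (φ : V ↪ W) (f : W → Bool) :
    (cutEdges (G.map φ) f).ncard = (cutEdges G (f ∘ φ)).ncard := by
  rw [← Set.ncard_image_of_injective _ φ.sym2Map.injective]
  congr 1
  ext e
  simp only [cutEdges, edgeSet_map, Set.mem_sep_iff, Set.mem_image]
  constructor
  · rintro ⟨⟨e, he, rfl⟩, hf⟩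
    exact ⟨e, ⟨he, by simpa [Sym2.map_map] using hf⟩, rfl⟩
  · rintro ⟨e, ⟨he, hf⟩, rfl⟩
    exact ⟨⟨e, he, rfl⟩, by simpa [Sym2.map_map] using hf⟩

theorem ncard_cutEdges_fromEdgeSet (E : Finset (Sym2 V)) (f : V → Bool) :
    (cutEdges (fromEdgeSet (E : Set (Sym2 V))) f).ncard =
      {e ∈ E | ¬(e.map f).IsDiag}.card := by
  rw [← Set.ncard_coe_finset]
  congr 1
  ext e
  have : e.IsDiag → (e.map f).IsDiag := Sym2.IsDiag.map
  simp only [cutEdges, edgeSet_fromEdgeSet, Set.mem_sdiff, Finset.mem_coe, Sym2.mem_diagSet,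
    Finset.coe_filter]
  grind

/-! ### Gluing at two roots -/

theorem disjoint_of_support_inter_subset (hsupp : G.support ∩ H.support ⊆ {a, b})
    (hab : ¬G.Adj a b) : Disjoint G H := by
  refine SimpleGraph.disjoint_left.2 fun x y hG hH ↦ ?_
  have hx : x = a ∨ x = b := hsupp ⟨⟨y, hG⟩, ⟨y, hH⟩⟩
  have hy : y = a ∨ y = b := hsupp ⟨⟨x, hG.symm⟩, ⟨x, hH.symm⟩⟩
  grind [Adj.symm, Adj.ne]

/-- The embedding of the vertices of a gadget on `n + 2` vertices into `Fin n ⊕ V` that sends its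
last two vertices to the roots `a` and `b` in `V`. -/
def rootEmb (n : ℕ) (hab : a ≠ b) : Fin (n + 2) ↪ Fin n ⊕ V where
  toFun := Fin.append Sum.inl ![Sum.inr a, Sum.inr b]
  inj' := by
    refine Fin.append_injective_iff.2 ⟨Sum.inl_injective, ?_, ?_⟩
    · intro i j
      fin_cases i <;> fin_cases j <;> simp [hab, hab.symm]
    · intro i j
      fin_cases j <;> simp

@[simp]
theorem rootEmb_castAdd (hab : a ≠ b) (i : Fin n) : rootEmb n hab (i.castAdd 2) = .inl i :=
  Fin.append_left ..

@[simp]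
theorem rootEmb_natAdd_zero (hab : a ≠ b) : rootEmb n hab (.natAdd n 0) = .inr a :=
  Fin.append_right ..

@[simp]
theorem rootEmb_natAdd_one (hab : a ≠ b) : rootEmb n hab (.natAdd n 1) = .inr b :=
  Fin.append_right ..

/-- The union of `M` and `G` with the last two vertices of `M` identified with `a` and `b`. -/
def glue (M : SimpleGraph (Fin (n + 2))) (G : SimpleGraph V) (hab : a ≠ b) :
    SimpleGraph (Fin n ⊕ V) :=
  M.map (rootEmb n hab) ⊔ G.map Function.Embedding.inr

variable {M : SimpleGraph (Fin (n + 2))} {hab : a ≠ b} {D ℓ d : ℕ}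

theorem support_map_rootEmb_inter_subset :
    (M.map (rootEmb n hab)).support ∩ (G.map Function.Embedding.inr).support ⊆
      {.inr a, .inr b} := by
  rintro _ ⟨⟨_, -, i, _, -, rfl, -⟩, ⟨_, -, v, _, -, hv, -⟩⟩
  induction i using Fin.addCases with
  | left i => simp at hv
  | right i => fin_cases i <;> simp

theorem not_adj_map_rootEmb (hM : ¬M.Adj (.natAdd n 0) (.natAdd n 1)) :
    ¬(M.map (rootEmb n hab)).Adj (.inr a) (.inr b) := by
  rwa [← rootEmb_natAdd_zero hab, ← rootEmb_natAdd_one hab, map_adj_apply]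

theorem c4Free_glue (hMC : C4Free M) (hM : ¬M.Adj (.natAdd n 0) (.natAdd n 1)) (hGC : C4Free G)
    (hG : 2 < G.edist a b) : C4Free (glue M G hab) :=
  c4Free_sup (c4Free_map _ hMC) (c4Free_map _ hGC) support_map_rootEmb_inter_subset
    (not_adj_map_rootEmb hM) (two_lt_edist_map Function.Embedding.inr hG)

theorem ncard_cutEdges_glue [Finite V] (hM : ¬M.Adj (.natAdd n 0) (.natAdd n 1))
    (f : Fin n ⊕ V → Bool) :
    (cutEdges (glue M G hab) f).ncard =
      (cutEdges M (f ∘ rootEmb n hab)).ncard + (cutEdges G (f ∘ .inr)).ncard := by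
  rw [glue, ncard_cutEdges_sup, ncard_cutEdges_map, ncard_cutEdges_map]
  · rfl
  · exact disjoint_of_support_inter_subset support_map_rootEmb_inter_subset
      (not_adj_map_rootEmb hM)

theorem exists_ne_of_glue {f : Fin n ⊕ V → Bool} (hab : a ≠ b) (hf : ∃ x y, f x ≠ f y) :
    (∃ i j, (f ∘ rootEmb n hab) i ≠ (f ∘ rootEmb n hab) j) ∨
      ∃ u v, (f ∘ Sum.inr) u ≠ (f ∘ Sum.inr) v := by
  by_contra! h
  have hconst : ∀ x, f x = f (.inr a) := by
    rintro (i | v)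
    · simpa using h.1 (i.castAdd 2) (.natAdd n 0)
    · exact h.2 v a
  obtain ⟨x, y, hxy⟩ := hf
  exact hxy ((hconst x).trans (hconst y).symm)

theorem edist_glue_rootEmb_le (i j : Fin (n + 2)) :
    (glue M G hab).edist (rootEmb n hab i) (rootEmb n hab j) ≤ M.edist i j :=
  (edist_anti le_sup_left).trans (edist_map_le _)

theorem edist_glue_inr_le (u v : V) : (glue M G hab).edist (.inr u) (.inr v) ≤ G.edist u v :=
  (edist_anti le_sup_right).trans (edist_map_le Function.Embedding.inr)

theorem edist_glue_inl_root_le (hM : ∀ i, M.edist i (.natAdd n 0) ≤ D) (i : Fin n) :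
    (glue M G hab).edist (.inl i) (.inr a) ≤ D := by
  simpa using (edist_glue_rootEmb_le (hab := hab) (i.castAdd 2) (.natAdd n 0)).trans (hM _)

theorem edist_glue_root_le (hM : ∀ i, M.edist i (.natAdd n 0) ≤ D)
    (hG : ∀ v, G.edist v a ≤ ℓ) (hD : D ≤ ℓ) (x : Fin n ⊕ V) :
    (glue M G hab).edist x (.inr a) ≤ ℓ := by
  rcases x with i | v
  · exact (edist_glue_inl_root_le hM i).trans (mod_cast hD)
  · exact (edist_glue_inr_le v a).trans (hG v)

theorem edist_glue_inl_le (hM : ∀ i, M.edist i (.natAdd n 0) ≤ D)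
    (hG : ∀ v, G.edist v a ≤ ℓ) (hD : D ≤ ℓ) (x : Fin n ⊕ V) (i : Fin n) :
    (glue M G hab).edist x (.inl i) ≤ (ℓ + D : ℕ) := by
  rw [Nat.cast_add]
  refine SimpleGraph.edist_triangle.trans (add_le_add (edist_glue_root_le hM hG hD x) ?_)
  rw [edist_comm]
  exact edist_glue_inl_root_le hM i

theorem edist_glue_le (hM : ∀ i, M.edist i (.natAdd n 0) ≤ D) (hG : ∀ v, G.edist v a ≤ ℓ)
    (hD : D ≤ ℓ) (hGd : ∀ u v, G.edist u v ≤ d) (hd : ℓ + D ≤ d) (x y : Fin n ⊕ V) :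
    (glue M G hab).edist x y ≤ d := by
  have h (x i) := (edist_glue_inl_le (hab := hab) hM hG hD x i).trans (Nat.cast_le.2 hd)
  rcases x with i | u <;> rcases y with j | v
  · exact h _ j
  · exact edist_comm (G := glue M G hab) ▸ h _ i
  · exact h _ j
  · exact (edist_glue_inr_le u v).trans (hGd u v)

theorem IsLeveling.glue {m : Fin (n + 2) → ℕ} {g : V → ℕ} (hm : IsLeveling M m)
    (hg : IsLeveling G g) (hma : m (.natAdd n 0) = D) (hmb : m (.natAdd n 1) = D)
    (ha : g a = 0) (hb : g b = 0) :
    IsLeveling (glue M G hab) (Sum.elim (m ∘ Fin.castAdd 2) (D + g ·)) := by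
  have hcomp : Sum.elim (m ∘ Fin.castAdd 2) (D + g ·) ∘ rootEmb n hab = m := by
    ext i
    induction i using Fin.addCases with
    | left i => simp
    | right i => fin_cases i <;> simp [*]
  have hinr : IsLeveling G (D + g ·) := fun u v h ↦ by
    simpa [add_assoc] using Nat.add_le_add_left (hg u v h) D
  exact .sup (.map _ (by rwa [hcomp])) (.map Function.Embedding.inr hinr)

/-! ### The pieces -/

/-- The gadget at the far end of a chain; `8` and `9` are glued to the roots of the rest. -/
abbrev head : SimpleGraph (Fin 10) :=
  fromEdgeSet ({s(0, 1), s(0, 2), s(0, 3), s(1, 2), s(1, 4), s(2, 5), s(3, 6), s(3, 7), s(4, 6),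
    s(5, 6), s(4, 9), s(5, 8), s(7, 8), s(7, 9)} : Finset (Sym2 (Fin 10)))

theorem c4Free_head : C4Free head := by
  rw [c4Free_iff]
  decide +kernel

theorem edist_head_root_le (i : Fin 10) : head.edist i 8 ≤ (3 : ℕ) :=
  edist_le_of_iterate_eq ![2, 2, 5, 7, 6, 8, 5, 8, 8, 7] (by decide) 3 (by revert i; decide)

theorem isLeveling_head : IsLeveling head ![0, 1, 1, 1, 2, 2, 2, 2, 3, 3] := by
  unfold IsLeveling
  decide

theorem le_ncard_cutEdges_head (f : Fin 10 → Bool) :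
    (f 8 ≠ f 9 → 2 ≤ (cutEdges head f).ncard) ∧
      (f 8 = f 9 → (∃ i j, f i ≠ f j) → 3 ≤ (cutEdges head f).ncard) := by
  rw [ncard_cutEdges_fromEdgeSet]
  revert f
  decide +kernel

/-- The gadget that lengthens a chain by two layers; `5` and `6` are glued to the old roots, and `0`
and `1` are the new roots. -/
abbrev link : SimpleGraph (Fin 7) :=
  fromEdgeSet ({s(0, 2), s(1, 3), s(1, 4), s(3, 4), s(2, 5), s(2, 6), s(3, 5), s(4, 6)} :
    Finset (Sym2 (Fin 7)))

theorem c4Free_link : C4Free link := by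
  rw [c4Free_iff]
  decide +kernel

theorem two_lt_edist_link : 2 < link.edist 0 1 := two_lt_edist_iff_forall.2 (by decide)

theorem edist_link_root_le (i : Fin 7) : link.edist i 5 ≤ (2 : ℕ) :=
  edist_le_of_iterate_eq ![2, 3, 5, 5, 3, 5, 2] (by decide) 2 (by revert i; decide)

theorem isLeveling_link : IsLeveling link ![0, 0, 1, 1, 1, 2, 2] := by
  unfold IsLeveling
  decide

theorem le_ncard_cutEdges_link (f : Fin 7 → Bool) :
    (f 0 ≠ f 1 → f 5 = f 6 → 1 ≤ (cutEdges link f).ncard) ∧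
      (f 0 = f 1 → f 5 ≠ f 6 → 2 ≤ (cutEdges link f).ncard) ∧
      (f 0 = f 1 → f 5 = f 6 → (∃ i j, f i ≠ f j) → 3 ≤ (cutEdges link f).ncard) := by
  rw [ncard_cutEdges_fromEdgeSet]
  revert f
  decide +kernel

/-- The gadget from which a chain grows, with roots `0` and `1`. -/
abbrev tail : SimpleGraph (Fin 10) :=
  fromEdgeSet ({s(0, 3), s(0, 4), s(0, 5), s(1, 2), s(2, 4), s(2, 6), s(3, 5), s(3, 6), s(4, 7),
    s(5, 8), s(7, 8), s(6, 9), s(7, 9), s(8, 9)} : Finset (Sym2 (Fin 10)))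

theorem c4Free_tail : C4Free tail := by
  rw [c4Free_iff]
  decide +kernel

theorem two_lt_edist_tail : 2 < tail.edist 0 1 := two_lt_edist_iff_forall.2 (by decide)

theorem edist_tail_root_le (i : Fin 10) : tail.edist i 0 ≤ (3 : ℕ) :=
  edist_le_of_iterate_eq ![0, 2, 4, 0, 0, 0, 3, 4, 5, 6] (by decide) 3 (by revert i; decide)

theorem isLeveling_tail : IsLeveling tail ![0, 0, 1, 1, 1, 1, 2, 2, 2, 3] := by
  unfold IsLeveling
  decide

theorem le_ncard_cutEdges_tail (f : Fin 10 → Bool) :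
    (f 0 ≠ f 1 → 1 ≤ (cutEdges tail f).ncard) ∧
      (f 0 = f 1 → (∃ i j, f i ≠ f j) → 3 ≤ (cutEdges tail f).ncard) := by
  rw [ncard_cutEdges_fromEdgeSet]
  revert f
  decide +kernel

/-! ### Chains -/

/-- The invariant of the part of a chain built so far, with roots `a` and `b`. The two conditions on
cuts say that identifying `a` with `b` yields a 3-edge-connected graph and that `a` and `b` are
connected. The eccentricity of `a` is `ℓ`, and the summand 3 in `edist_le` is the depth of
`head`. -/
structure IsTail (G : SimpleGraph V) (a b : V) (ℓ : ℕ) : Prop where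
  three_le : 3 ≤ ℓ
  c4Free : C4Free G
  two_lt_edist : 2 < G.edist a b
  one_le_ncard_cutEdges : ∀ f : V → Bool, f a ≠ f b → 1 ≤ (cutEdges G f).ncard
  three_le_ncard_cutEdges : ∀ f : V → Bool, f a = f b → (∃ u v, f u ≠ f v) →
    3 ≤ (cutEdges G f).ncard
  edist_root_le : ∀ v, G.edist v a ≤ ℓ
  edist_le : ∀ u v, G.edist u v ≤ (ℓ + 3 : ℕ)
  exists_isLeveling : ∃ g, IsLeveling G g ∧ g a = 0 ∧ g b = 0 ∧ ∃ v, g v = ℓ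

theorem IsTail.root_ne (h : IsTail G a b ℓ) : a ≠ b :=
  (two_lt_edist_iff.1 h.two_lt_edist).1

theorem isTail_tail : IsTail tail 0 1 3 where
  three_le := le_rfl
  c4Free := c4Free_tail
  two_lt_edist := two_lt_edist_tail
  one_le_ncard_cutEdges f := (le_ncard_cutEdges_tail f).1
  three_le_ncard_cutEdges f := (le_ncard_cutEdges_tail f).2
  edist_root_le := edist_tail_root_le
  edist_le u v := by
    rw [Nat.cast_add]
    exact SimpleGraph.edist_triangle.trans
      (add_le_add (edist_tail_root_le u) (edist_comm (G := tail) ▸ edist_tail_root_le v))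
  exists_isLeveling := ⟨_, isLeveling_tail, rfl, rfl, 9, rfl⟩

theorem IsTail.three_le_ncard_cutEdges_glue [Finite V] (h : IsTail G a b ℓ)
    (hM : ¬M.Adj (.natAdd n 0) (.natAdd n 1)) {f : Fin n ⊕ V → Bool} (hne : ∃ x y, f x ≠ f y)
    (hsep : f (.inr a) ≠ f (.inr b) → 2 ≤ (cutEdges M (f ∘ rootEmb n h.root_ne)).ncard)
    (htog : f (.inr a) = f (.inr b) →
      (∃ i j, (f ∘ rootEmb n h.root_ne) i ≠ (f ∘ rootEmb n h.root_ne) j) →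
        3 ≤ (cutEdges M (f ∘ rootEmb n h.root_ne)).ncard) :
    3 ≤ (cutEdges (glue M G h.root_ne) f).ncard := by
  rw [ncard_cutEdges_glue hM]
  by_cases hroot : f (.inr a) = f (.inr b)
  · rcases exists_ne_of_glue h.root_ne hne with hne | hne
    · exact le_add_right (htog hroot hne)
    · exact le_add_left (h.three_le_ncard_cutEdges _ hroot hne)
  · exact add_le_add (hsep hroot) (h.one_le_ncard_cutEdges _ hroot)

theorem IsTail.one_le_ncard_cutEdges_glue_link [Finite V] (h : IsTail G a b ℓ)
    {f : Fin 5 ⊕ V → Bool} (hf : f (.inl 0) ≠ f (.inl 1)) :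
    1 ≤ (cutEdges (glue link G h.root_ne) f).ncard := by
  rw [ncard_cutEdges_glue (by decide)]
  by_cases hroot : f (.inr a) = f (.inr b)
  · exact le_add_right ((le_ncard_cutEdges_link (f ∘ rootEmb 5 h.root_ne)).1 hf hroot)
  · exact le_add_left (h.one_le_ncard_cutEdges _ hroot)

theorem IsTail.three_le_ncard_cutEdges_glue_link [Finite V] (h : IsTail G a b ℓ)
    {f : Fin 5 ⊕ V → Bool} (hf : f (.inl 0) = f (.inl 1)) (hne : ∃ x y, f x ≠ f y) :
    3 ≤ (cutEdges (glue link G h.root_ne) f).ncard := by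
  obtain ⟨-, hsep, htog⟩ := le_ncard_cutEdges_link (f ∘ rootEmb 5 h.root_ne)
  exact h.three_le_ncard_cutEdges_glue (by decide) hne (hsep hf) (htog hf)

theorem IsTail.two_lt_edist_glue_link (h : IsTail G a b ℓ) :
    2 < (glue link G h.root_ne).edist (.inl 0) (.inl 1) := by
  refine two_lt_edist_sup (two_lt_edist_map (rootEmb 5 h.root_ne) two_lt_edist_link) ?_ ?_ <;>
    rintro ⟨_, -, v, _, -, hv, -⟩ <;> exact Sum.inr_ne_inl hv

theorem IsTail.glue_link [Finite V] (h : IsTail G a b ℓ) :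
    IsTail (glue link G h.root_ne) (.inl 0) (.inl 1) (ℓ + 2) where
  three_le := le_add_right h.three_le
  c4Free := c4Free_glue c4Free_link (by decide) h.c4Free h.two_lt_edist
  two_lt_edist := h.two_lt_edist_glue_link
  one_le_ncard_cutEdges _ := h.one_le_ncard_cutEdges_glue_link
  three_le_ncard_cutEdges _ := h.three_le_ncard_cutEdges_glue_link
  edist_root_le x :=
    edist_glue_inl_le edist_link_root_le h.edist_root_le (by have := h.three_le; omega) x 0
  edist_le :=
    edist_glue_le edist_link_root_le h.edist_root_le (by have := h.three_le; omega)
      (fun u v ↦ (h.edist_le u v).trans (by norm_cast; omega)) (by omega)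
  exists_isLeveling := by
    obtain ⟨g, hg, ha, hb, v, hv⟩ := h.exists_isLeveling
    exact ⟨_, isLeveling_link.glue hg (D := 2) rfl rfl ha hb, rfl, rfl, .inr v,
      by simp [hv, add_comm]⟩

theorem exists_isTail (k : ℕ) : ∃ (V : Type) (_ : Fintype V) (G : SimpleGraph V) (a b : V),
    Fintype.card V = 5 * k + 10 ∧ IsTail G a b (2 * k + 3) := by
  induction k with
  | zero => exact ⟨_, _, tail, 0, 1, Fintype.card_fin 10, isTail_tail⟩
  | succ k ih =>
    obtain ⟨V, _, G, a, b, hcard, h⟩ := ih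
    refine ⟨_, inferInstance, glue link G h.root_ne, .inl 0, .inl 1, ?_, h.glue_link⟩
    rw [Fintype.card_sum, Fintype.card_fin, hcard]
    ring

theorem IsTail.c4Free_glue_head (h : IsTail G a b ℓ) : C4Free (glue head G h.root_ne) :=
  c4Free_glue c4Free_head (by decide) h.c4Free h.two_lt_edist

theorem IsTail.edgeConnAtLeast_glue_head [Finite V] (h : IsTail G a b ℓ) :
    EdgeConnAtLeast (glue head G h.root_ne) 3 := by
  refine edgeConnAtLeast_of_le_ncard_cutEdges fun f hne ↦ ?_
  obtain ⟨hsep, htog⟩ := le_ncard_cutEdges_head (f ∘ rootEmb 8 h.root_ne)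
  exact h.three_le_ncard_cutEdges_glue (by decide) hne hsep htog

theorem IsTail.diam_glue_head (h : IsTail G a b ℓ) : (glue head G h.root_ne).diam = ℓ + 3 := by
  obtain ⟨g, hg, ha, hb, v, hv⟩ := h.exists_isLeveling
  refine (isLeveling_head.glue hg (D := 3) rfl rfl ha hb).diam_eq (u := .inl 0) (v := .inr v) rfl
    (by simp [hv, add_comm]) ?_
  exact edist_glue_le edist_head_root_le h.edist_root_le h.three_le h.edist_le le_rfl

end RootedGraph

open RootedGraph

theorem exists_tight_edgeconn_three (k : ℕ) (hk : 0 < k) :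
    ∃ (V : Type) (_ : Fintype V) (G : SimpleGraph V),
      G.Connected ∧ C4Free G ∧ EdgeConnAtLeast G 3 ∧
      Fintype.card V = 5 * k + 18 ∧
      G.diam = 2 * k + 6 ∧
      G.diam = (2 * Fintype.card V - 6) / 5 := by
  obtain ⟨V, _, G, a, b, hV, h⟩ := exists_isTail k
  have hconn : EdgeConnAtLeast (glue head G h.root_ne) 3 := h.edgeConnAtLeast_glue_head
  have hcard : Fintype.card (Fin 8 ⊕ V) = 5 * k + 18 := by
    rw [Fintype.card_sum, Fintype.card_fin, hV]
    ring
  have hdiam : (glue head G h.root_ne).diam = 2 * k + 6 := h.diam_glue_head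
  refine ⟨Fin 8 ⊕ V, inferInstance, glue head G h.root_ne,
    connected_of_edgeConnAtLeast hconn three_pos, h.c4Free_glue_head, hconn, hcard, hdiam, ?_⟩
  rw [hcard, hdiam]
  omega
end
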